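/- arXiv:2512.12954 — 3 statements merged into one kernel-verified Lean document; each statement's English description precedes it below -/
import Mathlib

section
/- Let H be a real Hilbert space, N ≥ 2, θ ∈ (0,1), Γ ⊆ (0,∞) a nonempty closed interval, and A₁,…,A_N : H ⇉ H maximally monotone operators. For γ ∈ Γ let T_γ : H^{N−1} → H^{N−1} be the Malitsky–Tam operator: for x = (x¹,…,x^{N−1}), T_γx = x + θ(z² − z¹, …, z^N − z^{N−1}), where z¹ = J_{γA₁}x¹, zⁱ = J_{γAᵢ}(z^{i−1} + xⁱ − x^{i−1}) for i = 2,…,N−1, and z^N = J_{γA_N}(z¹ + z^{N−1} − x^{N−1}). For δ,γ ∈ Γ let Q̃_{δ←γ} : H^{N−1} → H^{N−1} be given componentwise by Q̃¹_{δ←γ}x = (δ/γ)x¹ + (1 − δ/γ)J_{γA₁}x¹ and Q̃ⁱ_{δ←γ}x = (δ/γ)(xⁱ − x¹) + Q̃¹_{δ←γ}x for i = 2,…,N−1. Then for every nonempty bounded set S ⊆ ∪_{γ∈Γ}(Fix T_γ × {γ}) there exists L ≥ 0 such that ‖Q̃_{δ←γ}x − Q̃_{γ←γ}x‖ ≤ L|δ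 − γ| for all δ ∈ Γ and all (x,γ) ∈ S. -/
open scoped Pointwise RealInnerProductSpace

variable {H : Type*}

/-- A set-valued operator is monotone. -/
def SVMonotone [NormedAddCommGroup H] [InnerProductSpace ℝ H] (A : H → Set H) : Prop :=
  ∀ ⦃x y u v : H⦄, u ∈ A x → v ∈ A y → 0 ≤ ⟪x - y, u - v⟫

/-- The graph of a set-valued operator. -/
def SVGraph (A : H → Set H) : Set (H × H) := {p | p.2 ∈ A p.1}

/-- A set-valued operator is maximally monotone. -/
def MaxMonotone [NormedAddCommGroup H] [InnerProductSpace ℝ H] (A : H → Set H) : Prop :=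
  SVMonotone A ∧
    ∀ B : H → Set H, SVMonotone B → SVGraph A ⊆ SVGraph B → SVGraph B = SVGraph A

/-- The set of fixed points of a single-valued operator. -/
def FixSet {E : Type*} (T : E → E) : Set E := {x | T x = x}

/-- `J` is the resolvent `(Id + γA)⁻¹` of the set-valued operator `A`, i.e.
`J x` is a point with `x - J x ∈ γ • A (J x)` for every `x`. -/
def IsResolventOf [NormedAddCommGroup H] [InnerProductSpace ℝ H]
    (A : H → Set H) (γ : ℝ) (J : H → H) : Prop :=
  ∀ x : H, x - J x ∈ γ • A (J x)

/-- The vector `(x¹, …, x^{N−1}) ∈ H^{N−1}` read as a function on the indices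
`1, …, N−1` (so `MTvec N v i = xⁱ`). -/
def MTvec [NormedAddCommGroup H] (N : ℕ) (v : Fin (N - 1) → H) : ℕ → H :=
  fun i => if h : i - 1 < N - 1 then v ⟨i - 1, h⟩ else 0

theorem resolvent_bound [NormedAddCommGroup H] [InnerProductSpace ℝ H]
    {A : H → Set H} (hA : SVMonotone A) {γ : ℝ} (hγ : 0 < γ) {J : H → H}
    (hJ : IsResolventOf A γ J) {w u : H} (hu : u ∈ A w) (y : H) :
    ‖J y - w‖ ≤ ‖y - w - γ • u‖ := by
  obtain ⟨s, hs, hse⟩ := Set.mem_smul_set.1 (hJ y)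
  have h1 := hA hs hu
  have h2 : 0 ≤ ⟪J y - w, γ • (s - u)⟫ := by
    rw [real_inner_smul_right]; positivity
  have h3 : γ • (s - u) = (y - w - γ • u) - (J y - w) := by
    rw [smul_sub, hse]; abel
  rw [h3, inner_sub_right, real_inner_self_eq_norm_sq] at h2
  have h4 := real_inner_le_norm (J y - w) (y - w - γ • u)
  by_contra hc
  push Not at hc
  have := norm_nonneg (y - w - γ • u)
  nlinarith

theorem piLp_bound [NormedAddCommGroup H] [InnerProductSpace ℝ H] {n : ℕ}
    (x : PiLp 2 fun _ : Fin n => H) {C : ℝ} (hC : 0 ≤ C) (h : ∀ k, ‖x k‖ ≤ C) :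
    ‖x‖ ≤ (n + 1 : ℝ) * C := by
  rw [PiLp.norm_eq_of_L2]
  apply Real.sqrt_le_iff.2
  refine ⟨by positivity, ?_⟩
  have h1 : ∑ k, ‖x k‖ ^ 2 ≤ ∑ _k : Fin n, C ^ 2 :=
    Finset.sum_le_sum fun k _ => by have := h k; gcongr
  simp only [Finset.sum_const, Finset.card_univ, Fintype.card_fin, nsmul_eq_mul] at h1
  refine h1.trans ?_
  rw [mul_pow]
  have : (0 : ℝ) ≤ n := Nat.cast_nonneg n
  gcongr
  nlinarith

/-- the fixed-point relocators of the Malitsky–Tam operator satisfy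
Assumption A: on every nonempty bounded subset `S` of `⋃_{γ∈Γ} (Fix T_γ × {γ})` there
is `L ≥ 0` with `‖Q̃_{δ←γ} x − Q̃_{γ←γ} x‖ ≤ L |δ − γ|` for all `δ ∈ Γ`, `(x,γ) ∈ S`. -/
theorem stmt15 [NormedAddCommGroup H] [InnerProductSpace ℝ H] [CompleteSpace H]
    (N : ℕ) (hN : 2 ≤ N) (θ : ℝ) (hθ : θ ∈ Set.Ioo (0 : ℝ) 1)
    (a b : ℝ) (ha : 0 < a) (hab : a ≤ b)
    (A : ℕ → H → Set H) (hA : ∀ i, 1 ≤ i → i ≤ N → MaxMonotone (A i))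
    (J : ℕ → ℝ → H → H)
    (hJ : ∀ i, 1 ≤ i → i ≤ N → ∀ γ : ℝ, 0 < γ → IsResolventOf (A i) γ (J i γ))
    -- the auxiliary points z¹, …, z^N of the Malitsky–Tam operator
    (Z : ℝ → (PiLp 2 fun _ : Fin (N - 1) => H) → ℕ → H)
    (hZ1 : ∀ γ v, Z γ v 1 = J 1 γ (MTvec N v 1))
    (hZi : ∀ γ v i, 2 ≤ i → i ≤ N - 1 →
      Z γ v i = J i γ (Z γ v (i - 1) + MTvec N v i - MTvec N v (i - 1)))
    (hZN : ∀ γ v, Z γ v N = J N γ (Z γ v 1 + Z γ v (N - 1) - MTvec N v (N - 1)))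
    -- the Malitsky–Tam operator T_γ
    (T : ℝ → (PiLp 2 fun _ : Fin (N - 1) => H) → (PiLp 2 fun _ : Fin (N - 1) => H))
    (hT : ∀ γ v (k : Fin (N - 1)),
      T γ v k = v k + θ • (Z γ v ((k : ℕ) + 2) - Z γ v ((k : ℕ) + 1)))
    -- the fixed-point relocators Q̃_{δ←γ}
    (Q : ℝ → ℝ → (PiLp 2 fun _ : Fin (N - 1) => H) → (PiLp 2 fun _ : Fin (N - 1) => H))
    (hQ : ∀ δ γ v (k : Fin (N - 1)),
      Q δ γ v k = (δ / γ) • (v k - MTvec N v 1) +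
        ((δ / γ) • MTvec N v 1 + (1 - δ / γ) • J 1 γ (MTvec N v 1))) :
    ∀ S : Set ((PiLp 2 fun _ : Fin (N - 1) => H) × ℝ), S.Nonempty →
      Bornology.IsBounded S →
      S ⊆ (⋃ γ ∈ Set.Icc a b, FixSet (T γ) ×ˢ ({γ} : Set ℝ)) →
      ∃ L : ℝ, 0 ≤ L ∧ ∀ δ ∈ Set.Icc a b, ∀ p ∈ S,
        ‖Q δ p.2 p.1 - Q p.2 p.2 p.1‖ ≤ L * |δ - p.2| := by
  intro S _ hSb hS
  obtain ⟨R, hR⟩ := hSb.exists_norm_le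
  have hA1 := (hA 1 le_rfl (by omega)).1
  obtain ⟨u, hu, -⟩ := Set.mem_smul_set.1 (hJ 1 le_rfl (by omega) 1 one_pos 0)
  set w := J 1 1 0 with hw
  set C : ℝ := |R| + (‖w‖ + (|R| + ‖w‖ + |R| * ‖u‖)) with hC
  have hC0 : 0 ≤ C := by positivity
  refine ⟨((N - 1 : ℕ) + 1 : ℝ) * (C / a), by positivity, ?_⟩
  intro δ _ p hp
  obtain ⟨v, γ⟩ := p
  have hp' := hR _ hp
  have hγ : a ≤ γ := by
    have := hS hp
    simp only [Set.mem_iUnion, Set.mem_prod, Set.mem_singleton_iff] at this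
    obtain ⟨g, hg, -, h⟩ := this
    exact h ▸ hg.1
  have hγ0 : 0 < γ := ha.trans_le hγ
  have hv : ‖v‖ ≤ |R| := (norm_fst_le (v, γ)).trans (hp'.trans (le_abs_self R))
  have hγR : ‖γ‖ ≤ |R| := (norm_snd_le (v, γ)).trans (hp'.trans (le_abs_self R))
  have hvk : ∀ k, ‖v k‖ ≤ |R| := fun k => (PiLp.norm_apply_le v k).trans hv
  have hm : ‖MTvec N v 1‖ ≤ |R| := by
    unfold MTvec
    split_ifs with h
    · exact hvk _
    · simp
  have hJb : ‖J 1 γ (MTvec N v 1)‖ ≤ ‖w‖ + (|R| + ‖w‖ + |R| * ‖u‖) := by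
    have h1 := resolvent_bound hA1 hγ0 (hJ 1 le_rfl (by omega) γ hγ0) hu (MTvec N v 1)
    have h2 : ‖MTvec N v 1 - w - γ • u‖ ≤ |R| + ‖w‖ + |R| * ‖u‖ := by
      refine (norm_sub_le _ _).trans (add_le_add ((norm_sub_le _ _).trans ?_) ?_)
      · gcongr
      · rw [norm_smul]; gcongr
    have h4 := norm_sub_norm_le (J 1 γ (MTvec N v 1)) w
    linarith
  have key : ∀ k, ‖(Q δ γ v - Q γ γ v) k‖ ≤ C / a * |δ - γ| := by
    intro k
    have e : (Q δ γ v - Q γ γ v) k = ((δ - γ) / γ) • (v k - J 1 γ (MTvec N v 1)) := by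
      rw [PiLp.sub_apply, hQ, hQ, div_self hγ0.ne', sub_div, div_self hγ0.ne']
      module
    rw [e, norm_smul, Real.norm_eq_abs, abs_div, abs_of_pos hγ0]
    have h5 : ‖v k - J 1 γ (MTvec N v 1)‖ ≤ C :=
      (norm_sub_le _ _).trans (add_le_add (hvk k) hJb)
    calc |δ - γ| / γ * ‖v k - J 1 γ (MTvec N v 1)‖ ≤ |δ - γ| / a * C := by gcongr
      _ = C / a * |δ - γ| := by ring
  have := piLp_bound (Q δ γ v - Q γ γ v) (by positivity) key
  calc _ ≤ _ := this
    _ = _ := by ring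
end

section
/- Let H be a real Hilbert space, N ≥ 2, θ ∈ (0,1), and Γ ⊆ (0,∞) a nonempty closed interval. Suppose either (a) A₁,…,A_{N−1} : H → H are monotone and L-Lipschitz single-valued operators and A_N : H ⇉ H is maximally monotone and μ-strongly monotone, or (b) A₁,…,A_{N−1} : H → H are maximally monotone, μ-strongly monotone and L-Lipschitz single-valued operators and A_N : H ⇉ H is maximally monotone. For γ ∈ Γ let T_γ : H^{N−1} → H^{N−1} be the Malitsky–Tam operator: for x = (x¹,…,x^{N−1}), T_γx = x + θ(z² − z¹, …, z^N − z^{N−1}), where z¹ = J_{γA₁}x¹, zⁱ = J_{γAᵢ}(z^{i−1} + xⁱ − x^{i−1}) for i = 2,…,N−1, and z^N = J_{γA_N}(z¹ + z^{N−1} − x^{N−1}). Then there exists β ∈ [0,1) such that for every γ ∈ Γ, T_γ is a β-contraction on H^{N−1}. -/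
open scoped Pointwise RealInnerProductSpace

variable {H : Type*}

/-- A set-valued operator is `μ`-strongly monotone. -/
def SVStrongMonotone [NormedAddCommGroup H] [InnerProductSpace ℝ H]
    (μ : ℝ) (A : H → Set H) : Prop :=
  ∀ ⦃x y u v : H⦄, u ∈ A x → v ∈ A y → μ * ‖x - y‖ ^ 2 ≤ ⟪x - y, u - v⟫

/-- A set-valued operator is single-valued. -/
def SingleValued (A : H → Set H) : Prop := ∀ p : H, ∃ u : H, A p = {u}

/-- A set-valued operator is `L`-Lipschitz (as a single-valued map). -/
def SVLipschitz [NormedAddCommGroup H] (L : ℝ) (A : H → Set H) : Prop :=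
  ∀ ⦃p q u v : H⦄, u ∈ A p → v ∈ A q → ‖u - v‖ ≤ L * ‖p - q‖

theorem mt_partial [NormedAddCommGroup H] [InnerProductSpace ℝ H] (x z g : ℕ → H) (m : ℕ)
    (h0 : g 0 = x 0 - z 0)
    (hs : ∀ i < m, g (i+1) = z i + x (i+1) - x i - z (i+1)) :
    ∑ i ∈ Finset.range (m+1), ⟪z i, g i⟫ = ⟪z m, x m⟫
      - ∑ i ∈ Finset.range m, ⟪x i, z (i+1) - z i⟫
      - ‖z 0‖^2/2 - ‖z m‖^2/2 - (∑ i ∈ Finset.range m, ‖z (i+1) - z i‖^2)/2 := by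
  induction m with
  | zero =>
    simp [h0, inner_sub_right]
    ring
  | succ m ih =>
    have ih' := ih (fun i hi => hs i (by omega))
    rw [Finset.sum_range_succ, ih', hs m (by omega), Finset.sum_range_succ _ m,
      Finset.sum_range_succ _ m, norm_sub_sq_real]
    simp only [inner_sub_right, inner_add_right, real_inner_self_eq_norm_sq]
    rw [real_inner_comm (z (m+1)) (x m), real_inner_comm (z m) (x m)]
    ring

theorem mt_identity [NormedAddCommGroup H] [InnerProductSpace ℝ H] (x z g : ℕ → H) (m : ℕ)
    (h0 : g 0 = x 0 - z 0)
    (hs : ∀ i < m, g (i+1) = z i + x (i+1) - x i - z (i+1))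
    (hn : g (m+1) = z 0 + z m - x m - z (m+1)) :
    2 * ∑ i ∈ Finset.range (m+1), ⟪x i, z (i+1) - z i⟫ =
      - (∑ i ∈ Finset.range (m+1), ‖z (i+1) - z i‖^2) - ‖z 0 - z (m+1)‖^2
      - 2 * ∑ i ∈ Finset.range (m+2), ⟪z i, g i⟫ := by
  rw [Finset.sum_range_succ (fun i => ⟪z i, g i⟫) (m+1), mt_partial x z g m h0 hs, hn,
    Finset.sum_range_succ _ m, Finset.sum_range_succ _ m, norm_sub_sq_real, norm_sub_sq_real]
  simp only [inner_sub_right, inner_add_right, real_inner_self_eq_norm_sq]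
  rw [real_inner_comm (z (m+1)) (x m), real_inner_comm (z m) (x m),
    real_inner_comm (z (m+1)) (z 0)]
  ring

theorem mt_dist [NormedAddCommGroup H] (z : ℕ → H) (m : ℕ) (s : ℝ)
    (hd : ∀ i < m + 1, ‖z (i+1) - z i‖ ≤ s) (k i : ℕ) (h : i + k ≤ m + 1) :
    ‖z (i + k) - z i‖ ≤ k * s := by
  induction k with
  | zero => simp
  | succ k ih =>
    have h1 := ih (by omega)
    have h2 := hd (i+k) (by omega)
    have h3 : z (i + (k+1)) - z i = (z (i+k+1) - z (i+k)) + (z (i+k) - z i) := by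
      rw [← add_assoc]; abel
    rw [h3]
    refine (norm_add_le _ _).trans ?_
    push_cast
    linarith

theorem mt_x [NormedAddCommGroup H] (x z g : ℕ → H) (m : ℕ)
    (h0 : g 0 = x 0 - z 0)
    (hs : ∀ i < m, g (i+1) = z i + x (i+1) - x i - z (i+1)) (R : ℝ)
    (hg : ∀ i < m+1, ‖g i‖ ≤ R) (i : ℕ) (hi : i < m + 1) :
    ‖x i - z i‖ ≤ (i + 1) * R := by
  induction i with
  | zero => rw [← h0]; simpa using hg 0 hi
  | succ i ih =>
    have h1 := ih (by omega)
    have h2 := hg (i+1) hi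
    have h3 : x (i+1) - z (i+1) = g (i+1) + (x i - z i) := by
      rw [hs i (by omega)]; abel
    rw [h3]
    refine (norm_add_le _ _).trans ?_
    push_cast
    linarith

theorem mt_core [NormedAddCommGroup H] [InnerProductSpace ℝ H] (m : ℕ) (θ K κ : ℝ)
    (hθ0 : 0 < θ) (hθ1 : θ < 1) (hK : 0 ≤ K) (hκ : 0 < κ) :
    ∃ β : ℝ, β ∈ Set.Ico (0 : ℝ) 1 ∧ ∀ x z g : ℕ → H,
      g 0 = x 0 - z 0 →
      (∀ i < m, g (i+1) = z i + x (i+1) - x i - z (i+1)) →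
      g (m+1) = z 0 + z m - x m - z (m+1) →
      (∀ i < m+1, ‖g i‖ ≤ K * ‖z i‖) →
      (∀ i < m+2, 0 ≤ ⟪z i, g i⟫) →
      (∃ j < m+2, κ * ‖z j‖^2 ≤ ⟪z j, g j⟫) →
      ∑ i ∈ Finset.range (m+1), ‖x i + θ • (z (i+1) - z i)‖^2 ≤
        β^2 * ∑ i ∈ Finset.range (m+1), ‖x i‖^2 := by
  obtain ⟨M, hM⟩ : ∃ M : ℝ, M = (m+1) + 1 / √κ := ⟨_, rfl⟩
  have hκs : 0 < √κ := Real.sqrt_pos.2 hκ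
  have hM0 : 0 ≤ M := by rw [hM]; positivity
  obtain ⟨B, hB⟩ : ∃ B : ℝ, B = M + (m+1) * (K * M) := ⟨_, rfl⟩
  have hB0 : 0 ≤ B := by rw [hB]; positivity
  obtain ⟨C, hC⟩ : ∃ C : ℝ, C = (m+1) * B^2 := ⟨_, rfl⟩
  have hC0 : 0 ≤ C := by rw [hC]; positivity
  obtain ⟨c, hc⟩ : ∃ c : ℝ, c = θ * (1 - θ) := ⟨_, rfl⟩
  have hc0 : 0 < c := by rw [hc]; exact mul_pos hθ0 (by linarith)
  have hc1 : c < 1 := by rw [hc]; nlinarith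
  have hq0 : 0 < c / (C+1) := by positivity
  have hq1 : c / (C+1) ≤ 1 := by rw [div_le_one (by positivity)]; linarith
  refine ⟨√(1 - c/(C+1)), ⟨Real.sqrt_nonneg _, ?_⟩, ?_⟩
  · rw [Real.sqrt_lt' one_pos]; linarith
  intro x z g h0 hs hn hg hmon ⟨j, hj, hjs⟩
  rw [Real.sq_sqrt (by linarith)]
  have hid := mt_identity x z g m h0 hs hn
  obtain ⟨D, hD⟩ : ∃ D : ℝ, D = ∑ i ∈ Finset.range (m+1), ‖z (i+1) - z i‖^2 := ⟨_, rfl⟩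
  obtain ⟨G, hG⟩ : ∃ G : ℝ, G = ∑ i ∈ Finset.range (m+2), ⟪z i, g i⟫ := ⟨_, rfl⟩
  obtain ⟨X, hX⟩ : ∃ X : ℝ, X = ∑ i ∈ Finset.range (m+1), ‖x i‖^2 := ⟨_, rfl⟩
  have hD0 : 0 ≤ D := by rw [hD]; positivity
  have hG0 : 0 ≤ G := by
    rw [hG]; exact Finset.sum_nonneg (fun i hi => hmon i (Finset.mem_range.1 hi))
  have hexp : ∑ i ∈ Finset.range (m+1), ‖x i + θ • (z (i+1) - z i)‖^2 =
      X + θ * (2 * ∑ i ∈ Finset.range (m+1), ⟪x i, z (i+1) - z i⟫) + θ^2 * D := by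
    rw [hX, hD, Finset.mul_sum, Finset.mul_sum, Finset.mul_sum, ← Finset.sum_add_distrib,
      ← Finset.sum_add_distrib]
    refine Finset.sum_congr rfl (fun i _ => ?_)
    rw [norm_add_sq_real, inner_smul_right, norm_smul, mul_pow, Real.norm_eq_abs, sq_abs]
    ring
  rw [hexp, hid, ← hD, ← hG, ← hX]
  obtain ⟨s, hs'⟩ : ∃ s : ℝ, s = √(D + G) := ⟨_, rfl⟩
  have hs0 : 0 ≤ s := by rw [hs']; exact Real.sqrt_nonneg _
  have hs2 : s^2 = D + G := by rw [hs']; exact Real.sq_sqrt (by linarith)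
  have hd : ∀ i < m+1, ‖z (i+1) - z i‖ ≤ s := by
    intro i hi
    refine abs_le_of_sq_le_sq' ?_ hs0 |>.2
    have : ‖z (i+1) - z i‖^2 ≤ D := by
      rw [hD]
      exact Finset.single_le_sum (f := fun i => ‖z (i+1) - z i‖^2) (fun i _ => by positivity)
        (Finset.mem_range.2 hi)
    linarith
  have hzj : ‖z j‖ ≤ 1/√κ * s := by
    have h1 : ⟪z j, g j⟫ ≤ G := by
      rw [hG]
      exact Finset.single_le_sum (f := fun i => ⟪z i, g i⟫)
        (fun i hi => hmon i (Finset.mem_range.1 hi)) (Finset.mem_range.2 hj)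
    have h2 : √κ * ‖z j‖ ≤ s := by
      refine abs_le_of_sq_le_sq' ?_ hs0 |>.2
      rw [mul_pow, Real.sq_sqrt hκ.le]; linarith
    rw [one_div, inv_mul_eq_div, le_div_iff₀ hκs]; linarith
  have hz : ∀ i < m+2, ‖z i‖ ≤ M * s := by
    intro i hi
    have h1 : ‖z i - z j‖ ≤ (m+1) * s := by
      rcases le_total i j with h | h
      · obtain ⟨k, rfl⟩ := Nat.exists_eq_add_of_le h
        rw [norm_sub_rev]
        refine (mt_dist z m s hd k i (by omega)).trans ?_
        gcongr
        exact_mod_cast (by omega : k ≤ m+1)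
      · obtain ⟨k, rfl⟩ := Nat.exists_eq_add_of_le h
        refine (mt_dist z m s hd k j (by omega)).trans ?_
        gcongr
        exact_mod_cast (by omega : k ≤ m+1)
    have h2 : ‖z i‖ ≤ ‖z i - z j‖ + ‖z j‖ := by
      simpa using norm_add_le (z i - z j) (z j)
    rw [hM]; linarith
  have hx : ∀ i < m+1, ‖x i‖ ≤ B * s := by
    intro i hi
    have h1 := mt_x x z g m h0 hs (K * (M * s)) (fun i hi => (hg i hi).trans
      (mul_le_mul_of_nonneg_left (hz i (by omega)) hK)) i hi
    have h2 : ‖x i‖ ≤ ‖x i - z i‖ + ‖z i‖ := by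
      simpa using norm_add_le (x i - z i) (z i)
    have h3 := hz i (by omega)
    have h4 : ((i:ℝ) + 1) * (K * (M * s)) ≤ (m + 1) * (K * (M * s)) := by
      have : (i:ℝ) ≤ m := by exact_mod_cast (by omega : i ≤ m)
      gcongr
    rw [hB]; linarith
  have hXC : X ≤ C * (D + G) := by
    have : X ≤ ∑ i ∈ Finset.range (m+1), (B * s)^2 := by
      rw [hX]
      refine Finset.sum_le_sum (fun i hi => ?_)
      have := hx i (Finset.mem_range.1 hi)
      gcongr
    rw [Finset.sum_const, Finset.card_range, nsmul_eq_mul, mul_pow, hs2] at this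
    push_cast at this
    rw [hC]; linarith
  have hfin : c / (C+1) * X ≤ c * (D + G) := by
    have h1 : X ≤ (C+1) * (D+G) := by linarith
    calc c / (C+1) * X ≤ c / (C+1) * ((C+1) * (D+G)) := by gcongr
      _ = c * (D+G) := by field_simp
  have hcG : c * G ≤ 2 * θ * G := by
    refine mul_le_mul_of_nonneg_right ?_ hG0
    rw [hc]; nlinarith
  have hcD : c * D = θ * D - θ^2 * D := by rw [hc]; ring
  have hzz : 0 ≤ θ * ‖z 0 - z (m+1)‖^2 := by positivity
  nlinarith

theorem res_strong [NormedAddCommGroup H] [InnerProductSpace ℝ H] {A : H → Set H} {γ ν : ℝ}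
    {J : H → H} (hγ : 0 < γ) (hJ : IsResolventOf A γ J) (hA : SVStrongMonotone ν A) (p q : H) :
    γ * ν * ‖J p - J q‖^2 ≤ ⟪J p - J q, (p - J p) - (q - J q)⟫ := by
  obtain ⟨u, hu, hu'⟩ := hJ p
  obtain ⟨v, hv, hv'⟩ := hJ q
  have := hA hu hv
  simp only at hu' hv'
  rw [← hu', ← hv', ← smul_sub, inner_smul_right, mul_assoc]
  gcongr

theorem res_mono [NormedAddCommGroup H] [InnerProductSpace ℝ H] {A : H → Set H} {γ : ℝ}
    {J : H → H} (hγ : 0 < γ) (hJ : IsResolventOf A γ J) (hA : SVMonotone A) (p q : H) :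
    0 ≤ ⟪J p - J q, (p - J p) - (q - J q)⟫ := by
  have := res_strong (ν := 0) hγ hJ (fun x y u v hu hv => by simpa using hA hu hv) p q
  simpa using this

theorem res_lip [NormedAddCommGroup H] [InnerProductSpace ℝ H] {A : H → Set H} {γ L : ℝ}
    {J : H → H} (hγ : 0 < γ) (hJ : IsResolventOf A γ J) (hA : SVLipschitz L A) (p q : H) :
    ‖(p - J p) - (q - J q)‖ ≤ γ * L * ‖J p - J q‖ := by
  obtain ⟨u, hu, hu'⟩ := hJ p
  obtain ⟨v, hv, hv'⟩ := hJ q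
  have := hA hu hv
  simp only at hu' hv'
  rw [← hu', ← hv', ← smul_sub, norm_smul, Real.norm_eq_abs, abs_of_pos hγ, mul_assoc]
  gcongr

/-- under either (a) `A₁,…,A_{N−1}` monotone, single-valued and
`L`-Lipschitz with `A_N` maximally monotone and `μ`-strongly monotone, or (b)
`A₁,…,A_{N−1}` maximally monotone, `μ`-strongly monotone, single-valued and
`L`-Lipschitz with `A_N` maximally monotone, there exists `β ∈ [0,1)` such that the
Malitsky–Tam operator `T_γ` is a `β`-contraction on `H^{N−1}` for every `γ` in the
closed interval `Γ = [a,b] ⊆ (0,∞)`. -/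
theorem stmt16 [NormedAddCommGroup H] [InnerProductSpace ℝ H] [CompleteSpace H]
    (N : ℕ) (hN : 2 ≤ N) (θ : ℝ) (hθ : θ ∈ Set.Ioo (0 : ℝ) 1)
    (a b : ℝ) (ha : 0 < a) (hab : a ≤ b)
    (L μ : ℝ) (hL : 0 ≤ L) (hμ : 0 < μ)
    (A : ℕ → H → Set H)
    (hcase :
      ((∀ i, 1 ≤ i → i ≤ N - 1 →
          SingleValued (A i) ∧ SVMonotone (A i) ∧ SVLipschitz L (A i)) ∧
        MaxMonotone (A N) ∧ SVStrongMonotone μ (A N)) ∨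
      ((∀ i, 1 ≤ i → i ≤ N - 1 →
          SingleValued (A i) ∧ MaxMonotone (A i) ∧ SVStrongMonotone μ (A i) ∧
            SVLipschitz L (A i)) ∧
        MaxMonotone (A N)))
    (J : ℕ → ℝ → H → H)
    (hJ : ∀ i, 1 ≤ i → i ≤ N → ∀ γ : ℝ, 0 < γ → IsResolventOf (A i) γ (J i γ))
    -- the auxiliary points z¹, …, z^N of the Malitsky–Tam operator
    (Z : ℝ → (PiLp 2 fun _ : Fin (N - 1) => H) → ℕ → H)
    (hZ1 : ∀ γ v, Z γ v 1 = J 1 γ (MTvec N v 1))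
    (hZi : ∀ γ v i, 2 ≤ i → i ≤ N - 1 →
      Z γ v i = J i γ (Z γ v (i - 1) + MTvec N v i - MTvec N v (i - 1)))
    (hZN : ∀ γ v, Z γ v N = J N γ (Z γ v 1 + Z γ v (N - 1) - MTvec N v (N - 1)))
    -- the Malitsky–Tam operator T_γ
    (T : ℝ → (PiLp 2 fun _ : Fin (N - 1) => H) → (PiLp 2 fun _ : Fin (N - 1) => H))
    (hT : ∀ γ v (k : Fin (N - 1)),
      T γ v k = v k + θ • (Z γ v ((k : ℕ) + 2) - Z γ v ((k : ℕ) + 1))) :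
    ∃ β : ℝ, β ∈ Set.Ico (0 : ℝ) 1 ∧
      ∀ γ ∈ Set.Icc a b, ∀ v w : PiLp 2 fun _ : Fin (N - 1) => H,
        ‖T γ v - T γ w‖ ≤ β * ‖v - w‖ := by
  obtain ⟨m, rfl⟩ : ∃ m, N = m + 2 := ⟨N - 2, by omega⟩
  have hmon : ∀ i, 1 ≤ i → i ≤ m + 2 → SVMonotone (A i) := by
    intro i h1 h2
    rcases hcase with ⟨h, hN1, _⟩ | ⟨h, hN1⟩
    · rcases Nat.lt_or_ge i (m+2) with h3 | h3
      · exact (h i h1 (by omega)).2.1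
      · obtain rfl : i = m + 2 := by omega
        exact hN1.1
    · rcases Nat.lt_or_ge i (m+2) with h3 | h3
      · exact (h i h1 (by omega)).2.1.1
      · obtain rfl : i = m + 2 := by omega
        exact hN1.1
  have hlip : ∀ i, 1 ≤ i → i ≤ m + 1 → SVLipschitz L (A i) := by
    intro i h1 h2
    rcases hcase with ⟨h, _⟩ | ⟨h, _⟩
    · exact (h i h1 (by omega)).2.2
    · exact (h i h1 (by omega)).2.2.2
  have hstr : ∃ j < m + 2, SVStrongMonotone μ (A (j+1)) := by
    rcases hcase with ⟨_, _, h⟩ | ⟨h, _⟩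
    · exact ⟨m+1, by omega, h⟩
    · exact ⟨0, by omega, (h 1 (by omega) (by omega)).2.2.1⟩
  obtain ⟨β, hβ, hmain⟩ := mt_core (H := H) m θ (b * L) (a * μ) hθ.1 hθ.2
    (mul_nonneg (ha.le.trans hab) hL) (mul_pos ha hμ)
  refine ⟨β, hβ, fun γ hγ v w => ?_⟩
  have hγ0 : 0 < γ := lt_of_lt_of_le ha hγ.1
  obtain ⟨P, hP⟩ : ∃ P : (PiLp 2 fun _ : Fin (m + 2 - 1) => H) → ℕ → H, ∀ v,
      (∀ i < m+2, Z γ v (i+1) = J (i+1) γ (P v i)) ∧ P v 0 = MTvec (m+2) v 1 ∧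
      (∀ i < m, P v (i+1) = Z γ v (i+1) + MTvec (m+2) v (i+2) - MTvec (m+2) v (i+1)) ∧
      P v (m+1) = Z γ v 1 + Z γ v (m+1) - MTvec (m+2) v (m+1) := by
    refine ⟨fun v i => if i = 0 then MTvec (m+2) v 1 else if i = m+1 then
      Z γ v 1 + Z γ v (m+1) - MTvec (m+2) v (m+1) else
      Z γ v i + MTvec (m+2) v (i+1) - MTvec (m+2) v i, fun v => ⟨?_, ?_, ?_, ?_⟩⟩
    · intro i hi
      by_cases h0 : i = 0
      · subst h0; simpa using hZ1 γ v
      by_cases h1 : i = m+1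
      · subst h1; simpa using hZN γ v
      · simpa [h0, h1] using hZi γ v (i+1) (by omega) (by omega)
    · simp
    · intro i hi
      simp [show i ≠ m by omega]
    · simp
  obtain ⟨hv1, hv2, hv3, hv4⟩ := hP v
  obtain ⟨hw1, hw2, hw3, hw4⟩ := hP w
  have key := hmain (fun i => MTvec (m+2) v (i+1) - MTvec (m+2) w (i+1))
    (fun i => Z γ v (i+1) - Z γ w (i+1))
    (fun i => (P v i - Z γ v (i+1)) - (P w i - Z γ w (i+1)))
    (by simp only [hv2, hw2]; abel)
    (by intro i hi; simp only [hv3 i hi, hw3 i hi]; abel)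
    (by simp only [hv4, hw4]; abel)
    (by
      intro i hi
      simp only [hv1 i (by omega), hw1 i (by omega)]
      refine (res_lip hγ0 (hJ (i+1) (by omega) (by omega) γ hγ0)
        (hlip (i+1) (by omega) (by omega)) _ _).trans ?_
      have := hγ.2
      gcongr)
    (by
      intro i hi
      simp only [hv1 i (by omega), hw1 i (by omega)]
      exact res_mono hγ0 (hJ (i+1) (by omega) (by omega) γ hγ0)
        (hmon (i+1) (by omega) (by omega)) _ _)
    (by
      obtain ⟨j, hj, hjs⟩ := hstr
      refine ⟨j, hj, ?_⟩
      simp only [hv1 j hj, hw1 j hj]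
      refine le_trans ?_ (res_strong hγ0 (hJ (j+1) (by omega) (by omega) γ hγ0) hjs _ _)
      have := hγ.1
      gcongr)
  refine abs_le_of_sq_le_sq' ?_ (mul_nonneg hβ.1 (norm_nonneg _)) |>.2
  rw [mul_pow, PiLp.norm_sq_eq_of_L2, PiLp.norm_sq_eq_of_L2]
  have hx : ∀ (u : PiLp 2 fun _ : Fin (m + 2 - 1) => H) (k : Fin (m+2-1)),
      u k = MTvec (m+2) u ((k:ℕ)+1) := by
    intro u k
    have := k.2
    simp [MTvec]
    intro h
    omega
  have e1 : ∑ k : Fin (m+2-1), ‖(v - w) k‖^2 =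
      ∑ i ∈ Finset.range (m+1), ‖MTvec (m+2) v (i+1) - MTvec (m+2) w (i+1)‖^2 := by
    rw [← Fin.sum_univ_eq_sum_range (fun i => ‖MTvec (m+2) v (i+1) - MTvec (m+2) w (i+1)‖^2)]
    refine Finset.sum_congr rfl (fun k _ => ?_)
    rw [PiLp.sub_apply, hx v, hx w]
  have e2 : ∑ k : Fin (m+2-1), ‖(T γ v - T γ w) k‖^2 =
      ∑ i ∈ Finset.range (m+1), ‖(MTvec (m+2) v (i+1) - MTvec (m+2) w (i+1)) +
        θ • ((Z γ v (i+1+1) - Z γ w (i+1+1)) - (Z γ v (i+1) - Z γ w (i+1)))‖^2 := by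
    rw [← Fin.sum_univ_eq_sum_range (fun i => ‖(MTvec (m+2) v (i+1) - MTvec (m+2) w (i+1)) +
        θ • ((Z γ v (i+1+1) - Z γ w (i+1+1)) - (Z γ v (i+1) - Z γ w (i+1)))‖^2)]
    refine Finset.sum_congr rfl (fun k _ => ?_)
    rw [PiLp.sub_apply, hT, hT, hx v, hx w]
    congr 2
    module
  rw [e1, e2]
  exact key
end

section
/- Let H be a real Hilbert space, N ≥ 2, A₁ : H ⇉ H maximally monotone, and δ, γ > 0. Define Q̃_{δ←γ} : H^{N−1} → H^{N−1} componentwise for x = (x¹,…,x^{N−1}) by Q̃¹_{δ←γ}x = (δ/γ)x¹ + (1 − δ/γ)J_{γA₁}x¹ and Q̃ⁱ_{δ←γ}x = (δ/γ)(xⁱ − x¹) + Q̃¹_{δ←γ}x for i = 2,…,N−1. Then Q̃_{δ←γ} is Lipschitz continuous with constant √(δ/γ) + √(|γ − δ|/γ) · max{√(N−1), √(2N)·√(δ/γ)}; that is, ‖Q̃_{δ←γ}x − Q̃_{δ←γ}w‖ ≤ (√(δ/γ) + √(|γ − δ|/γ)·max{√(N−1), √(2N)·√(δ/γ)})·‖x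 − w‖ for all x, w ∈ H^{N−1}. -/
open scoped Pointwise RealInnerProductSpace

variable {H : Type*}

theorem res_nonexp [NormedAddCommGroup H] [InnerProductSpace ℝ H]
    (A : H → Set H) (hA : SVMonotone A) (γ : ℝ) (hγ : 0 < γ) (J : H → H)
    (hJ : IsResolventOf A γ J) (x y : H) : ‖J x - J y‖ ≤ ‖x - y‖ := by
  obtain ⟨a, ha, hax⟩ := Set.mem_smul_set.mp (hJ x)
  obtain ⟨b, hb, hby⟩ := Set.mem_smul_set.mp (hJ y)
  have h := hA ha hb
  have h1 : x - y = (J x - J y) + γ • (a - b) := by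
    rw [smul_sub, hax, hby]; abel
  have h2 : ‖x - y‖ ^ 2 = ‖J x - J y‖ ^ 2 + 2 * (γ * ⟪J x - J y, a - b⟫) + ‖γ • (a - b)‖ ^ 2 := by
    rw [h1, norm_add_sq_real, inner_smul_right]
  have h3 : 0 ≤ γ * ⟪J x - J y, a - b⟫ := mul_nonneg hγ.le h
  refine le_of_sq_le_sq ?_ (norm_nonneg _)
  nlinarith [sq_nonneg ‖γ • (a - b)‖]

theorem const_bound (M t : ℝ) (hM : 0 ≤ M) (ht : 0 < t) :
    t + |1 - t| * √M ≤ √t + √|1 - t| * max (√M) (√(2 * (M + 1)) * √t) := by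
  have hst := Real.sq_sqrt ht.le
  have hst0 := Real.sqrt_nonneg t
  have hsM := Real.sq_sqrt hM
  have hsM0 := Real.sqrt_nonneg M
  have hu := Real.sq_sqrt (abs_nonneg (1 - t))
  have hu0 := Real.sqrt_nonneg (|1 - t|)
  rcases le_total t 1 with h | h
  · have h1 : t ≤ √t := by
      have : √t ≤ 1 := Real.sqrt_le_one.mpr h
      nlinarith
    have h2 : |1 - t| ≤ √|1 - t| := by
      have : √|1 - t| ≤ 1 := by
        rw [Real.sqrt_le_one]; rw [abs_of_nonneg (by linarith)]; linarith
      nlinarith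
    have h3 := mul_le_mul_of_nonneg_left (le_max_left (√M) (√(2 * (M + 1)) * √t)) hu0
    have h4 := mul_le_mul_of_nonneg_right h2 hsM0
    linarith
  · have h3 := mul_le_mul_of_nonneg_left (le_max_right (√M) (√(2 * (M + 1)) * √t)) hu0
    have ha : |1 - t| = t - 1 := by rw [abs_of_nonpos (by linarith)]; ring
    have h1 : 1 ≤ √t := Real.one_le_sqrt.mpr h
    have h2 : 1 + √M ≤ √(2 * (M + 1)) := by
      apply Real.le_sqrt_of_sq_le
      nlinarith [sq_nonneg (1 - √M)]
    have h4 : √|1 - t| ≤ √t := Real.sqrt_le_sqrt (by rw [ha]; linarith)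
    have h5 : |1 - t| ≤ √|1 - t| * √t := by nlinarith
    have h6 : |1 - t| * (1 + √M) ≤ (√|1 - t| * √t) * √(2 * (M + 1)) :=
      mul_le_mul h5 h2 (by positivity) (by positivity)
    nlinarith

/-- the Malitsky–Tam fixed-point relocator `Q̃_{δ←γ}` is Lipschitz
continuous with constant `√(δ/γ) + √(|γ−δ|/γ)·max{√(N−1), √(2N)·√(δ/γ)}`. -/
theorem stmt17 [NormedAddCommGroup H] [InnerProductSpace ℝ H] [CompleteSpace H]
    (N : ℕ) (hN : 2 ≤ N)
    (A₁ : H → Set H) (hA₁ : MaxMonotone A₁)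
    (δ γ : ℝ) (hδ : 0 < δ) (hγ : 0 < γ)
    (J₁ : H → H) (hJ₁ : IsResolventOf A₁ γ J₁)
    (Q : (PiLp 2 fun _ : Fin (N - 1) => H) → (PiLp 2 fun _ : Fin (N - 1) => H))
    (hQ : ∀ v (k : Fin (N - 1)),
      Q v k = (δ / γ) • (v k - MTvec N v 1) +
        ((δ / γ) • MTvec N v 1 + (1 - δ / γ) • J₁ (MTvec N v 1))) :
    ∀ v w : PiLp 2 fun _ : Fin (N - 1) => H,
      ‖Q v - Q w‖ ≤
        (Real.sqrt (δ / γ) + Real.sqrt (|γ - δ| / γ) *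
          max (Real.sqrt ((N : ℝ) - 1)) (Real.sqrt (2 * (N : ℝ)) * Real.sqrt (δ / γ))) *
        ‖v - w‖ := by
  intro v w
  have h0 : 0 < N - 1 := by omega
  have hMT : ∀ u : PiLp 2 fun _ : Fin (N - 1) => H, MTvec N u 1 = u ⟨0, h0⟩ := by
    intro u; simp [MTvec, h0]
  have hj := res_nonexp A₁ hA₁.1 γ hγ J₁ hJ₁ (v ⟨0, h0⟩) (w ⟨0, h0⟩)
  have hc1 : ‖v ⟨0, h0⟩ - w ⟨0, h0⟩‖ ≤ ‖v - w‖ := by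
    simpa using PiLp.norm_apply_le (v - w) ⟨0, h0⟩
  set j := J₁ (v ⟨0, h0⟩) - J₁ (w ⟨0, h0⟩) with hjdef
  let c : PiLp 2 fun _ : Fin (N - 1) => H := WithLp.toLp 2 (fun _ => j)
  have hNc : ((N - 1 : ℕ) : ℝ) = (N : ℝ) - 1 := by
    rw [Nat.cast_sub (by omega)]; simp
  have hc : ‖c‖ = √((N : ℝ) - 1) * ‖j‖ := by
    rw [PiLp.norm_eq_of_L2]
    simp only [c, Finset.sum_const, Finset.card_univ, Fintype.card_fin, nsmul_eq_mul]
    rw [hNc, Real.sqrt_mul (by rw [← hNc]; positivity), Real.sqrt_sq (norm_nonneg _)]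
  have hdec : Q v - Q w = (δ / γ) • (v - w) + (1 - δ / γ) • c := by
    ext k
    simp only [PiLp.sub_apply, PiLp.add_apply, PiLp.smul_apply, hQ, hMT, c, hjdef]
    module
  have ht : 0 < δ / γ := div_pos hδ hγ
  have habs : |γ - δ| / γ = |1 - δ / γ| := by
    rw [← abs_of_pos hγ, ← abs_div, abs_of_pos hγ, sub_div, div_self hγ.ne']
  have hM : (0 : ℝ) ≤ (N : ℝ) - 1 := by rw [← hNc]; positivity
  have hb := const_bound ((N : ℝ) - 1) (δ / γ) hM ht
  rw [sub_add_cancel] at hb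
  rw [habs]
  calc ‖Q v - Q w‖ ≤ ‖(δ / γ) • (v - w)‖ + ‖(1 - δ / γ) • c‖ := by
        rw [hdec]; exact norm_add_le _ _
    _ = (δ / γ) * ‖v - w‖ + |1 - δ / γ| * (√((N : ℝ) - 1) * ‖j‖) := by
        rw [norm_smul, norm_smul, hc, Real.norm_eq_abs, Real.norm_eq_abs, abs_of_pos ht]
    _ ≤ (δ / γ) * ‖v - w‖ + |1 - δ / γ| * (√((N : ℝ) - 1) * ‖v - w‖) := by
        gcongr; exact hj.trans hc1
    _ = (δ / γ + |1 - δ / γ| * √((N : ℝ) - 1)) * ‖v - w‖ := by ring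
    _ ≤ _ := mul_le_mul_of_nonneg_right hb (norm_nonneg _)
end
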